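/- arXiv:1301.0147 — 2 statements merged into one kernel-verified Lean document; each statement's English description precedes it below -/
import Mathlib

section
/- Let T > 0, let f : [0,T] → ℝ^d be a bounded measurable function with ‖f(s)‖ ≤ M for all s ∈ [0,T], and let x ∈ ℝ^d. If for some ε with 0 < ε < T one has ∫_0^T ‖x + ∫_0^t f(s) ds‖² dt ≤ ε³, then sup_{t ∈ [0,T]} ‖∫_0^t f(s) ds‖ ≤ 2(1 + M)ε. -/
open MeasureTheory

/-!
The path `g t = x + ∫_0^t f` is `M`-Lipschitz. Every point `t` of `[0, T]` lies in a window of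
length `ε` inside `[0, T]`; since the mean of `‖g‖²` over that window is at most `ε²`, some point
`s` of the window has `‖g s‖ ≤ ε`, and hence `‖g t‖ ≤ ε + M ε`. Applying this at `t` and at `0`
bounds the increment `g t - g 0 = ∫_0^t f` by `2 (1 + M) ε`.
-/

open scoped NNReal Interval

theorem exists_mem_Icc_add_subset_Icc {α : Type*} [AddCommGroup α] [LinearOrder α]
    [IsOrderedAddMonoid α] {a b ε t : α} (hε : 0 ≤ ε) (hab : a + ε ≤ b) (ht : t ∈ Set.Icc a b) :
    ∃ c, t ∈ Set.Icc c (c + ε) ∧ Set.Icc c (c + ε) ⊆ Set.Icc a b := by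
  refine ⟨min t (b - ε), ⟨min_le_left _ _, ?_⟩, Set.Icc_subset_Icc ?_ ?_⟩
  · rw [← min_add_add_right, sub_add_cancel]
    exact le_min (le_add_of_nonneg_right hε) ht.2
  · exact le_min ht.1 (le_sub_iff_add_le.2 hab)
  · exact le_sub_iff_add_le.1 (min_le_right _ _)

section Norm

variable {E : Type*} [SeminormedAddCommGroup E] {p ε : ℝ}

theorem exists_mem_norm_le_of_setIntegral_norm_rpow_le {α : Type*} [MeasurableSpace α]
    {μ : Measure α} {s : Set α} {g : α → E} (hμ : μ s ≠ 0) (hμ' : μ s ≠ ⊤) (hp : 0 < p)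
    (hε : 0 ≤ ε) (hg : IntegrableOn (fun y ↦ ‖g y‖ ^ p) s μ)
    (h : ∫ y in s, ‖g y‖ ^ p ∂μ ≤ μ.real s * ε ^ p) : ∃ y ∈ s, ‖g y‖ ≤ ε := by
  obtain ⟨y, hys, hy⟩ := exists_le_setAverage hμ hμ' hg
  refine ⟨y, hys, (Real.rpow_le_rpow_iff (norm_nonneg _) hε hp).1 (hy.trans ?_)⟩
  rw [setAverage_eq, smul_eq_mul]
  exact inv_mul_le_of_le_mul₀ measureReal_nonneg (by positivity) h

theorem norm_le_of_lipschitzOnWith_of_integral_norm_rpow_le {g : ℝ → E} {K : ℝ≥0} {a b t : ℝ}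
    (hg : LipschitzOnWith K g (Set.Icc a b)) (hp : 0 < p) (hε : 0 < ε) (hab : a + ε ≤ b)
    (h : ∫ s in a..b, ‖g s‖ ^ p ≤ ε ^ (p + 1)) (ht : t ∈ Set.Icc a b) :
    ‖g t‖ ≤ (1 + K) * ε := by
  obtain ⟨c, htc, hsub⟩ := exists_mem_Icc_add_subset_Icc hε.le hab ht
  obtain ⟨hac, hcb⟩ := (Set.Icc_subset_Icc_iff (by linarith)).1 hsub
  have hint : IntervalIntegrable (fun s ↦ ‖g s‖ ^ p) volume a b :=
    (hg.continuousOn.norm.rpow_const fun _ _ ↦ .inr hp.le).intervalIntegrable_of_Icc (by linarith)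
  have hwindow : ∫ s in Set.Ioc c (c + ε), ‖g s‖ ^ p ≤ volume.real (Set.Ioc c (c + ε)) * ε ^ p :=
    calc ∫ s in Set.Ioc c (c + ε), ‖g s‖ ^ p
      _ = ∫ s in c..(c + ε), ‖g s‖ ^ p := (intervalIntegral.integral_of_le (by linarith)).symm
      _ ≤ ∫ s in a..b, ‖g s‖ ^ p :=
        intervalIntegral.integral_mono_interval hac (by linarith) hcb
          (.of_forall fun _ ↦ by positivity) hint
      _ ≤ ε ^ (p + 1) := h
      _ = volume.real (Set.Ioc c (c + ε)) * ε ^ p := by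
        rw [Real.volume_real_Ioc_of_le (by linarith), add_sub_cancel_left,
          Real.rpow_add_one hε.ne', mul_comm]
  obtain ⟨s, hs, hgs⟩ := exists_mem_norm_le_of_setIntegral_norm_rpow_le (by simpa using hε)
    measure_Ioc_lt_top.ne hp hε.le (hint.1.mono_set (Set.Ioc_subset_Ioc hac hcb)) hwindow
  have hs' := Set.Ioc_subset_Icc_self hs
  calc ‖g t‖
    _ ≤ ‖g s‖ + ‖g t - g s‖ := norm_le_norm_add_norm_sub' _ _
    _ ≤ ε + K * |t - s| := add_le_add hgs (hg.norm_sub_le ht (hsub hs'))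
    _ ≤ ε + K * ε := by
      gcongr
      simpa [Real.dist_eq] using Real.dist_le_of_mem_Icc htc hs'
    _ = (1 + K) * ε := by ring

end Norm

section Primitive

variable {E : Type*} [NormedAddCommGroup E] [NormedSpace ℝ E] {f : ℝ → E} {K : ℝ≥0}

theorem lipschitzOnWith_intervalIntegral_of_ae_norm_le {s : Set ℝ} {a : ℝ}
    (hs : s.OrdConnected) (ha : a ∈ s) (hf : AEStronglyMeasurable f (volume.restrict s))
    (hbdd : ∀ᵐ r ∂volume.restrict s, ‖f r‖ ≤ K) :
    LipschitzOnWith K (fun t ↦ ∫ r in a..t, f r) s := by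
  have hbdd' : ∀ u ∈ s, ∀ v ∈ s, ∀ᵐ r ∂volume.restrict (Ι u v), ‖f r‖ ≤ K := fun u hu v hv ↦
    ae_restrict_of_ae_restrict_of_subset (hs.uIoc_subset hu hv) hbdd
  have hint : ∀ t ∈ s, IntervalIntegrable f volume a t := fun t ht ↦
    intervalIntegrable_iff.2 <| .of_bound (by simp [Set.uIoc])
      (hf.mono_set (hs.uIoc_subset ha ht)) K (hbdd' a ha t ht)
  refine .of_dist_le_mul fun t ht u hu ↦ ?_
  rw [dist_eq_norm, intervalIntegral.integral_interval_sub_left (hint t ht) (hint u hu),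
    Real.dist_eq]
  exact intervalIntegral.norm_integral_le_of_norm_le_const_ae <|
    (ae_restrict_iff' measurableSet_uIoc).1 (hbdd' u hu t ht)

theorem stmt_0_general [CompleteSpace E] {T p ε : ℝ}
    (hf : AEStronglyMeasurable f (volume.restrict (Set.Icc 0 T)))
    (hbdd : ∀ᵐ s ∂volume.restrict (Set.Icc 0 T), ‖f s‖ ≤ K) (x : E)
    (hp : 0 < p) (hε : 0 < ε) (hεT : ε ≤ T)
    (h : ∫ t in (0 : ℝ)..T, ‖x + ∫ s in (0 : ℝ)..t, f s‖ ^ p ≤ ε ^ (p + 1)) :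
    ∀ t ∈ Set.Icc 0 T, ‖∫ s in (0 : ℝ)..t, f s‖ ≤ 2 * (1 + K) * ε := by
  intro t ht
  have h0 : (0 : ℝ) ∈ Set.Icc 0 T := ⟨le_rfl, hε.le.trans hεT⟩
  set g : ℝ → E := fun t ↦ x + ∫ s in (0 : ℝ)..t, f s with hg
  have hlip : LipschitzOnWith K g (Set.Icc 0 T) := by
    simpa using (LipschitzWith.const x).lipschitzOnWith.add
      (lipschitzOnWith_intervalIntegral_of_ae_norm_le Set.ordConnected_Icc h0 hf hbdd)
  have hbound : ∀ u ∈ Set.Icc 0 T, ‖g u‖ ≤ (1 + K) * ε := fun u ↦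
    norm_le_of_lipschitzOnWith_of_integral_norm_rpow_le hlip hp hε (by simpa using hεT) h
  calc ‖∫ s in (0 : ℝ)..t, f s‖
    _ = ‖g t - g 0‖ := by simp [hg]
    _ ≤ ‖g t‖ + ‖g 0‖ := norm_sub_le _ _
    _ ≤ (1 + K) * ε + (1 + K) * ε := add_le_add (hbound t ht) (hbound 0 h0)
    _ = 2 * (1 + K) * ε := by ring

end Primitive

/-- Lemma 2.3 of the paper (deterministic ingredient of Norris' lemma):
if `∫_0^T ‖x + ∫_0^t f(s) ds‖² dt ≤ ε³` for a bounded measurable `f` with `‖f‖ ≤ M`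
and `0 < ε < T`, then `sup_{t ∈ [0,T]} ‖∫_0^t f(s) ds‖ ≤ 2(1+M)ε`. -/
theorem stmt_0 {d : ℕ} (T M ε : ℝ) (hT : 0 < T)
    (f : ℝ → EuclideanSpace ℝ (Fin d)) (hf_meas : Measurable f)
    (hf_bdd : ∀ s ∈ Set.Icc (0 : ℝ) T, ‖f s‖ ≤ M)
    (x : EuclideanSpace ℝ (Fin d))
    (hε : 0 < ε) (hεT : ε < T)
    (h : (∫ t in (0:ℝ)..T, ‖x + ∫ s in (0:ℝ)..t, f s‖ ^ 2) ≤ ε ^ 3) :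
    ∀ t ∈ Set.Icc (0 : ℝ) T, ‖∫ s in (0:ℝ)..t, f s‖ ≤ 2 * (1 + M) * ε := by
  lift M to ℝ≥0 using (norm_nonneg _).trans (hf_bdd 0 ⟨le_rfl, hT.le⟩)
  exact stmt_0_general hf_meas.aestronglyMeasurable
    (ae_restrict_of_forall_mem measurableSet_Icc hf_bdd) x two_pos hε hεT.le
    (by exact_mod_cast h)
end

section
/- Let ℓ : [0,∞) → [0,∞) be nondecreasing and right-continuous with ℓ(0) = 0, with generalized inverse ℓ⁻¹(t) := inf{s ≥ 0 : ℓ(s) > t} ∈ [0,∞] (inf ∅ = ∞). Let g : [0,∞) → ℝ be locally integrable and set h(t) := ∫_0^t g(s) ds. Then for all 0 ≤ a < b ≤ T one has ∫_0^{ℓ(T)} 1_{(a,b]}(ℓ⁻¹(s)) g(s) ds = h(ℓ(b)) − h(ℓ(a)). -/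
open MeasureTheory
open scoped ENNReal

/-- The generalized (right-continuous) inverse `ℓ⁻¹(t) = inf {s ≥ 0 : ℓ(s) > t}`,
with values in `[0,∞]` and the convention `inf ∅ = ∞`. -/
noncomputable def linv (ℓ : ℝ → ℝ) (t : ℝ) : ℝ≥0∞ :=
  sInf {x : ℝ≥0∞ | ∃ s : ℝ, 0 ≤ s ∧ x = ENNReal.ofReal s ∧ t < ℓ s}

/-!
If `t < ℓ c` then `ℓ⁻¹(t) ≤ c`, and by right-continuity `ℓ c < t` forces `c < ℓ⁻¹(t)`. So
`{ℓ⁻¹ ≤ c}` lies between `(-∞, ℓ c)` and `(-∞, ℓ c]`: for a measure without point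
masses it is almost everywhere `(-∞, ℓ c]`, and `{a < ℓ⁻¹ ≤ b}` is almost everywhere `(ℓ a, ℓ b]`.
-/

section GeneralizedInverse

variable {ℓ : ℝ → ℝ} {c t : ℝ}

theorem linv_le_ofReal_of_lt (hc : 0 ≤ c) (ht : t < ℓ c) : linv ℓ t ≤ ENNReal.ofReal c :=
  sInf_le ⟨c, hc, rfl, ht⟩

theorem exists_lt_of_linv_lt_ofReal {d : ℝ} (h : linv ℓ t < ENNReal.ofReal d) :
    ∃ s, 0 ≤ s ∧ s < d ∧ t < ℓ s := by
  obtain ⟨_, ⟨s, hs, rfl, hts⟩, hsd⟩ := sInf_lt_iff.mp h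
  exact ⟨s, hs, (ENNReal.ofReal_lt_ofReal_iff_of_nonneg hs).mp hsd, hts⟩

theorem le_of_linv_le_ofReal (hmono : MonotoneOn ℓ (Set.Ici 0)) (hc : 0 ≤ c)
    (hrc : ContinuousWithinAt ℓ (Set.Ici c) c) (h : linv ℓ t ≤ ENNReal.ofReal c) : t ≤ ℓ c := by
  by_contra! hlt
  obtain ⟨d, hcd : c < d, hd⟩ :=
    mem_nhdsGE_iff_exists_Ico_subset.mp (hrc.eventually_lt_const hlt)
  have hlt_d : linv ℓ t < ENNReal.ofReal d :=
    h.trans_lt ((ENNReal.ofReal_lt_ofReal_iff_of_nonneg hc).mpr hcd)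
  obtain ⟨s, hs, hsd, hts⟩ := exists_lt_of_linv_lt_ofReal hlt_d
  rcases le_total c s with hcs | hsc
  · exact lt_asymm hts (hd ⟨hcs, hsd⟩)
  · exact (hlt.trans hts).not_ge (hmono hs hc hsc)

variable {μ : Measure ℝ} [NullSingletonClass μ]

theorem linv_preimage_Iic_ae_eq (hmono : MonotoneOn ℓ (Set.Ici 0)) (hc : 0 ≤ c)
    (hrc : ContinuousWithinAt ℓ (Set.Ici c) c) :
    linv ℓ ⁻¹' Set.Iic (ENNReal.ofReal c) =ᵐ[μ] Set.Iic (ℓ c) := by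
  have Iio_subset : Set.Iio (ℓ c) ⊆ linv ℓ ⁻¹' Set.Iic (ENNReal.ofReal c) :=
    fun _ => linv_le_ofReal_of_lt hc
  have subset_Iic : linv ℓ ⁻¹' Set.Iic (ENNReal.ofReal c) ⊆ Set.Iic (ℓ c) :=
    fun _ => le_of_linv_le_ofReal hmono hc hrc
  exact subset_Iic.eventuallyLE.antisymm
    (Iio_ae_eq_Iic.symm.le.trans Iio_subset.eventuallyLE)

theorem linv_preimage_Ioc_ae_eq {a b : ℝ} (hmono : MonotoneOn ℓ (Set.Ici 0))
    (ha : 0 ≤ a) (hb : 0 ≤ b) (hrca : ContinuousWithinAt ℓ (Set.Ici a) a)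
    (hrcb : ContinuousWithinAt ℓ (Set.Ici b) b) :
    linv ℓ ⁻¹' Set.Ioc (ENNReal.ofReal a) (ENNReal.ofReal b) =ᵐ[μ] Set.Ioc (ℓ a) (ℓ b) := by
  rw [← Set.Iic_sdiff_Iic, ← Set.Iic_sdiff_Iic, Set.preimage_sdiff]
  exact (linv_preimage_Iic_ae_eq hmono hb hrcb).diff (linv_preimage_Iic_ae_eq hmono ha hrca)

end GeneralizedInverse

section ChangeOfVariables

variable {E : Type*} [NormedAddCommGroup E] [NormedSpace ℝ E] {μ : Measure ℝ}

theorem intervalIntegral_indicator_Ioc {c x y d : ℝ} (hcx : c ≤ x) (hxy : x ≤ y) (hyd : y ≤ d)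
    (g : ℝ → E) :
    ∫ s in c..d, (Set.Ioc x y).indicator g s ∂μ = ∫ s in x..y, g s ∂μ := by
  rw [intervalIntegral.integral_of_le (hcx.trans (hxy.trans hyd)),
    setIntegral_indicator measurableSet_Ioc,
    Set.inter_eq_right.mpr (Set.Ioc_subset_Ioc hcx hyd), intervalIntegral.integral_of_le hxy]

theorem intervalIntegral_indicator_linv_preimage_Ioc [NullSingletonClass μ] {ℓ : ℝ → ℝ}
    {a b c d : ℝ} (hmono : MonotoneOn ℓ (Set.Ici 0)) (ha : 0 ≤ a) (hab : a ≤ b)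
    (hrca : ContinuousWithinAt ℓ (Set.Ici a) a) (hrcb : ContinuousWithinAt ℓ (Set.Ici b) b)
    (hca : c ≤ ℓ a) (hbd : ℓ b ≤ d) (g : ℝ → E) :
    ∫ s in c..d, (linv ℓ ⁻¹' Set.Ioc (ENNReal.ofReal a) (ENNReal.ofReal b)).indicator g s ∂μ
      = ∫ s in ℓ a..ℓ b, g s ∂μ := by
  have hb : 0 ≤ b := ha.trans hab
  have indicator_ae_eq :
      (linv ℓ ⁻¹' Set.Ioc (ENNReal.ofReal a) (ENNReal.ofReal b)).indicator g
        =ᵐ[μ] (Set.Ioc (ℓ a) (ℓ b)).indicator g :=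
    indicator_ae_eq_of_ae_eq_set (linv_preimage_Ioc_ae_eq hmono ha hb hrca hrcb)
  rw [intervalIntegral.integral_congr_ae (indicator_ae_eq.mono fun _ hs _ => hs),
    intervalIntegral_indicator_Ioc hca (hmono ha hb hab) hbd]

theorem stmt_3_general [NullSingletonClass μ] {ℓ : ℝ → ℝ} {a b T : ℝ}
    (hmono : MonotoneOn ℓ (Set.Ici 0)) (ha : 0 ≤ a) (hab : a ≤ b) (hbT : b ≤ T)
    (hrca : ContinuousWithinAt ℓ (Set.Ici a) a) (hrcb : ContinuousWithinAt ℓ (Set.Ici b) b)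
    (hℓa : 0 ≤ ℓ a) {g h : ℝ → E} (hg : IntervalIntegrable g μ 0 (ℓ b))
    (hh : ∀ t, h t = ∫ s in (0 : ℝ)..t, g s ∂μ) :
    ∫ s in (0 : ℝ)..ℓ T,
        (linv ℓ ⁻¹' Set.Ioc (ENNReal.ofReal a) (ENNReal.ofReal b)).indicator g s ∂μ
      = h (ℓ b) - h (ℓ a) := by
  have hb : 0 ≤ b := ha.trans hab
  have hℓab : ℓ a ≤ ℓ b := hmono ha hb hab
  have hℓbT : ℓ b ≤ ℓ T := hmono hb (hb.trans hbT) hbT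
  have hg_a : IntervalIntegrable g μ 0 (ℓ a) :=
    hg.mono_set (Set.uIcc_subset_uIcc_left (Set.mem_uIcc_of_le hℓa hℓab))
  rw [intervalIntegral_indicator_linv_preimage_Ioc hmono ha hab hrca hrcb hℓa hℓbT, hh, hh,
    intervalIntegral.integral_interval_sub_left hg hg_a]

end ChangeOfVariables

/-- Lemma 4.3 of the paper for an indicator integrand: for `h(t) = ∫_0^t g(s) ds`
with `g` locally integrable, a nondecreasing right-continuous `ℓ : [0,∞) → [0,∞)`
with `ℓ(0) = 0`, and `0 ≤ a < b ≤ T`,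
`∫_0^{ℓ(T)} 1_{(a,b]}(ℓ⁻¹(s)) g(s) ds = h(ℓ(b)) - h(ℓ(a))`. -/
theorem stmt_3 (ℓ : ℝ → ℝ)
    (hmono : MonotoneOn ℓ (Set.Ici 0))
    (hrc : ∀ a : ℝ, 0 ≤ a → ContinuousWithinAt ℓ (Set.Ici a) a)
    (hℓ0 : ℓ 0 = 0) (hnonneg : ∀ t : ℝ, 0 ≤ t → 0 ≤ ℓ t)
    (g : ℝ → ℝ) (hg : LocallyIntegrable g)
    (h : ℝ → ℝ) (hh : ∀ t, h t = ∫ s in (0:ℝ)..t, g s)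
    (a b T : ℝ) (ha : 0 ≤ a) (hab : a < b) (hbT : b ≤ T) :
    (∫ s in (0:ℝ)..(ℓ T),
        {s : ℝ | ENNReal.ofReal a < linv ℓ s ∧ linv ℓ s ≤ ENNReal.ofReal b}.indicator g s)
      = h (ℓ b) - h (ℓ a) := by
  exact stmt_3_general hmono ha hab.le hbT (hrc a ha) (hrc b (ha.trans hab.le))
    (hnonneg a ha) (hg.integrableOn_isCompact isCompact_uIcc).intervalIntegrable hh
end
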